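/- Let V₁, …, Vₙ be finite-dimensional vector spaces, t ∈ V₁ ⊗ ⋯ ⊗ Vₙ, and A ⊆ {1,…,n}. Suppose A is a union of c subsets S₁, …, S_c, and for each i the flattening rank of t with respect to S_i is at most r. Then the flattening rank of t with respect to A is at most r^c. -/

import Mathlib

/-- The flattening of a tensor `t ∈ V₁ ⊗ ⋯ ⊗ Vₙ` (given in coordinates, `V_i = 𝕜^{d i}`)
with respect to a subset `S` of the factors: the matrix of the linear map
`(⊗_{l∈S} V_l)* → ⊗_{l∉S} V_l` obtained by contraction with `t`. -/
def flattening {𝕜 : Type*} [Field 𝕜] {ι : Type*} [Fintype ι] [DecidableEq ι]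
    (d : ι → ℕ) (S : Finset ι) (t : (∀ i, Fin (d i)) → 𝕜) :
    Matrix (∀ i : {i // i ∈ S}, Fin (d i.1)) (∀ i : {i // i ∉ S}, Fin (d i.1)) 𝕜 :=
  fun a b => t fun i => if h : i ∈ S then a ⟨i, h⟩ else b ⟨i, h⟩

/-- The flattening rank of a tensor with respect to a subset `S` of the factors. -/
noncomputable def flatteningRank {𝕜 : Type*} [Field 𝕜] {ι : Type*} [Fintype ι] [DecidableEq ι]
    (d : ι → ℕ) (S : Finset ι) (t : (∀ i, Fin (d i)) → 𝕜) : ℕ :=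
  (flattening d S t).rank

/-- The column space of a matrix `M` admits a projection factoring through `𝕜 ^ M.rank`. -/
theorem Matrix.exists_mul_mul_eq_self {𝕜 : Type*} [Field 𝕜] {m n : Type*} [Fintype m]
    [DecidableEq m] [Fintype n] [DecidableEq n] (M : Matrix m n 𝕜) :
    ∃ (B : Matrix m (Fin M.rank) 𝕜) (D : Matrix (Fin M.rank) m 𝕜), B * D * M = M := by
  obtain ⟨p, hp⟩ := (LinearMap.range M.mulVecLin).subtype.exists_leftInverse_of_injective
    (Submodule.ker_subtype _)
  let e : LinearMap.range M.mulVecLin ≃ₗ[𝕜] (Fin M.rank → 𝕜) :=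
    (Module.finBasisOfFinrankEq 𝕜 _ rfl).equivFun
  refine ⟨LinearMap.toMatrix' ((LinearMap.range M.mulVecLin).subtype ∘ₗ e.symm.toLinearMap),
    LinearMap.toMatrix' (e.toLinearMap ∘ₗ p), ?_⟩
  apply Matrix.toLin'.injective
  refine LinearMap.ext fun v => ?_
  have h : p (M.mulVec v) = ⟨M.mulVec v, v, rfl⟩ := LinearMap.congr_fun hp ⟨M.mulVec v, v, rfl⟩
  simp [Matrix.toLin'_mul, h]

/-- A projection onto the column space of a flattening fixes the tensor itself. -/
theorem exists_sum_mul_update_eq {𝕜 : Type*} [Field 𝕜] {ι : Type*} [Fintype ι] [DecidableEq ι]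
    (d : ι → ℕ) (S : Finset ι) (t : (∀ i, Fin (d i)) → 𝕜) :
    ∃ (B : Matrix (∀ i : {i // i ∈ S}, Fin (d i.1)) (Fin (flatteningRank d S t)) 𝕜)
      (D : Matrix (Fin (flatteningRank d S t)) (∀ i : {i // i ∈ S}, Fin (d i.1)) 𝕜),
      ∀ f : ∀ i, Fin (d i), t f = ∑ k, B (fun i => f i) k *
        ∑ x, D k x * t fun i => if h : i ∈ S then x ⟨i, h⟩ else f i := by
  obtain ⟨B, D, h⟩ := (flattening d S t).exists_mul_mul_eq_self
  refine ⟨B, D, fun f => ?_⟩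
  have := congrFun (congrFun h fun i => f i) fun i => f i
  rw [Matrix.mul_assoc] at this
  simp only [Matrix.mul_apply, flattening, dite_eq_ite, ite_self] at this
  exact this.symm

theorem flatteningRank_union_le {𝕜 : Type*} [Field 𝕜] {ι : Type*} [Fintype ι] [DecidableEq ι]
    (d : ι → ℕ) {S T : Finset ι} (hST : Disjoint S T) (t : (∀ i, Fin (d i)) → 𝕜) :
    flatteningRank d (S ∪ T) t ≤ flatteningRank d S t * flatteningRank d T t := by
  obtain ⟨B, D, hS⟩ := exists_sum_mul_update_eq d S t
  obtain ⟨B', D', hT⟩ := exists_sum_mul_update_eq d T t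
  let L : Matrix (∀ i : {i // i ∈ S ∪ T}, Fin (d i.1))
      (Fin (flatteningRank d S t) × Fin (flatteningRank d T t)) 𝕜 := fun a k =>
    B (fun i => a ⟨i, Finset.mem_union_left _ i.2⟩) k.1 *
      B' (fun i => a ⟨i, Finset.mem_union_right _ i.2⟩) k.2
  let R : Matrix (Fin (flatteningRank d S t) × Fin (flatteningRank d T t))
      (∀ i : {i // i ∉ S ∪ T}, Fin (d i.1)) 𝕜 := fun k b =>
    ∑ x, D k.1 x * ∑ y, D' k.2 y * flattening d (S ∪ T) t (fun i =>
      if h : i.1 ∈ S then x ⟨i, h⟩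
      else y ⟨i, (Finset.mem_union.1 i.2).resolve_left h⟩) b
  have key : flattening d (S ∪ T) t = L * R := by
    ext a b
    set f : ∀ i, Fin (d i) := fun i => if h : i ∈ S ∪ T then a ⟨i, h⟩ else b ⟨i, h⟩ with hf
    have hfS : (fun i : {i // i ∈ S} => f i) =
        fun i : {i // i ∈ S} => a ⟨i, Finset.mem_union_left _ i.2⟩ := by
      funext i
      simp [hf, i.2]
    have hfT (x : ∀ i : {i // i ∈ S}, Fin (d i.1)) :
        (fun i : {i // i ∈ T} => if h : i.1 ∈ S then x ⟨i, h⟩ else f i) =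
        fun i : {i // i ∈ T} => a ⟨i, Finset.mem_union_right _ i.2⟩ := by
      funext i
      have : i.1 ∉ S := Finset.disjoint_right.1 hST i.2
      simp [hf, i.2, this]
    have hfST (x : ∀ i : {i // i ∈ S}, Fin (d i.1)) (y : ∀ i : {i // i ∈ T}, Fin (d i.1)) :
        (t fun i => if h : i ∈ T then y ⟨i, h⟩ else if h : i ∈ S then x ⟨i, h⟩ else f i) =
        flattening d (S ∪ T) t (fun i => if h : i.1 ∈ S then x ⟨i, h⟩
          else y ⟨i, (Finset.mem_union.1 i.2).resolve_left h⟩) b := by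
      refine congrArg t (funext fun i => ?_)
      by_cases h₁ : i ∈ S
      · have h₂ : i ∉ T := Finset.disjoint_left.1 hST h₁
        simp [h₁, h₂]
      · by_cases h₂ : i ∈ T <;> simp [hf, h₁, h₂]
    have hinner (x : ∀ i : {i // i ∈ S}, Fin (d i.1)) := hT fun i =>
      if h : i ∈ S then x ⟨i, h⟩ else f i
    simp only [hfT, hfST] at hinner
    change t f = _
    rw [hS f, hfS, Matrix.mul_apply, Fintype.sum_prod_type]
    refine Finset.sum_congr rfl fun k _ => ?_
    simp only [hinner, L, R, Finset.mul_sum]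
    rw [Finset.sum_comm]
    refine Finset.sum_congr rfl fun l _ => Finset.sum_congr rfl fun x _ =>
      Finset.sum_congr rfl fun y _ => ?_
    ring
  calc flatteningRank d (S ∪ T) t = (L * R).rank := congrArg Matrix.rank key
    _ ≤ L.rank := Matrix.rank_mul_le_left L R
    _ ≤ _ := by simpa using L.rank_le_card_width

theorem flatteningRank_empty_le {𝕜 : Type*} [Field 𝕜] {ι : Type*} [Fintype ι] [DecidableEq ι]
    (d : ι → ℕ) (t : (∀ i, Fin (d i)) → 𝕜) : flatteningRank d ∅ t ≤ 1 := by
  simpa [flatteningRank] using (flattening d ∅ t).rank_le_card_height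

theorem flatteningRank_biUnion_le {𝕜 : Type*} [Field 𝕜] {ι κ : Type*} [Fintype ι]
    [DecidableEq ι] (d : ι → ℕ) (t : (∀ i, Fin (d i)) → 𝕜) (s : Finset κ)
    (S : κ → Finset ι) (hdisj : Pairwise fun a b => Disjoint (S a) (S b)) :
    flatteningRank d (s.biUnion S) t ≤ ∏ a ∈ s, flatteningRank d (S a) t := by
  classical
  induction s using Finset.induction_on with
  | empty => simpa using flatteningRank_empty_le d t
  | insert a s ha ih =>
    rw [Finset.biUnion_insert, Finset.prod_insert ha]
    refine (flatteningRank_union_le d ?_ t).trans (Nat.mul_le_mul_left _ ih)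
    rw [Finset.disjoint_biUnion_right]
    exact fun b hb => hdisj fun hab => ha (hab ▸ hb)

theorem stmt_7 {𝕜 : Type*} [Field 𝕜] (n : ℕ) (d : Fin n → ℕ)
    (t : (∀ i, Fin (d i)) → 𝕜) (A : Finset (Fin n)) (r c : ℕ)
    (S : Fin c → Finset (Fin n))
    (hdisj : Pairwise fun a b => Disjoint (S a) (S b))
    (hunion : Finset.univ.biUnion S = A)
    (hrk : ∀ a, flatteningRank d (S a) t ≤ r) :
    flatteningRank d A t ≤ r ^ c := by
  subst hunion
  exact (flatteningRank_biUnion_le d t _ S hdisj).trans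
    ((Finset.prod_le_pow_card _ _ r fun a _ => hrk a).trans_eq (by simp))
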